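/- arXiv:2509.13264 — 2 statements merged into one kernel-verified Lean document; each statement's English description precedes it below -/
import Mathlib

section
/- Let p be an odd prime, let λ be a bar-partition with p-bar core λ_(p̄) and p-bar cocore λ^[p̄], and let σ be a σ_p-type automorphism of ℚ̄. If sgn(λ_(p̄)) = −1 and sgn(λ^[p̄]) = −1, then τ(λ,σ) = (−1)^((p−1)/2)·τ(λ_(p̄),σ)·τ(λ^[p̄],σ). -/
open scoped BigOperators

/-- A bar-partition: a finite set of distinct positive parts. -/
structure BarPartition where
  parts : Finset ℕ
  zero_not_mem : 0 ∉ parts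

namespace BarPartition

/-- The size `|λ|` of a bar-partition: the sum of its parts. -/
def size (l : BarPartition) : ℕ := ∑ a ∈ l.parts, a

/-- The length `ℓ(λ)` of a bar-partition: its number of parts. -/
def length (l : BarPartition) : ℕ := l.parts.card

/-- The sign `sgn(λ) = (-1)^(|λ| - ℓ(λ))` of a bar-partition. -/
def sgn (l : BarPartition) : ℤ := (-1) ^ (l.size - l.length)

/-- The empty bar-partition. -/
def empty : BarPartition := ⟨∅, by simp⟩

end BarPartition

/-- One `t`-bar removal step: replace a part `a > t` by `a - t` (if `a - t` is not already a
part), delete a part equal to `t`, or delete two parts whose sum is `t`. -/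
def BarRemoval (t : ℕ) (μ ν : BarPartition) : Prop :=
  (∃ a ∈ μ.parts, t < a ∧ a - t ∉ μ.parts ∧ ν.parts = insert (a - t) (μ.parts.erase a)) ∨
  (t ∈ μ.parts ∧ ν.parts = μ.parts.erase t) ∨
  (∃ a ∈ μ.parts, ∃ b ∈ μ.parts, a ≠ b ∧ a + b = t ∧ ν.parts = (μ.parts.erase a).erase b)

/-- A `t`-bar core: a bar-partition admitting no `t`-bar removal. -/
def IsBarCore (t : ℕ) (κ : BarPartition) : Prop := ∀ ν, ¬ BarRemoval t κ ν

/-- `κ` is the `t`-bar core of `λ`: it is obtained from `λ` by a (maximal) sequence of `t`-bar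
removals and admits no further removal. -/
def IsBarCoreOf (t : ℕ) (l κ : BarPartition) : Prop :=
  Relation.ReflTransGen (BarRemoval t) l κ ∧ IsBarCore t κ

/-- `λ` has empty `t`-bar core. -/
def HasEmptyBarCore (t : ℕ) (l : BarPartition) : Prop :=
  Relation.ReflTransGen (BarRemoval t) l BarPartition.empty

/-- The twisted runner at `r` (for `1 ≤ r ≤ (t-1)/2`) of the `t`-bar-abacus of `λ`, as a set
of integers: position `i ≥ 0` (above the fence) carries a bead iff `t*i + r` is a part of `λ`,
and position `i < 0` (slot `j = -(i+1)` below the fence) carries a bead iff `t*j + (t - r)` is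
*not* a part of `λ` (beads and empty slots of runner `t - r` are interchanged). -/
def twistedRunner (t r : ℕ) (l : BarPartition) : Set ℤ :=
  {i : ℤ | (0 ≤ i ∧ t * i.toNat + r ∈ l.parts) ∨
           (i < 0 ∧ t * (-(i + 1)).toNat + (t - r) ∉ l.parts)}

/-- Two bar-partitions have the same `t`-bar quotient: the runners `0` agree, and for each
`1 ≤ r ≤ (t-1)/2` the twisted runners differ by a shift (the shift by the unique balancing
integer produces the Frobenius symbol of the quotient component, so shift-equivalent twisted
runners are exactly those with equal quotient component). -/
def HasSameBarQuotient (t : ℕ) (l m : BarPartition) : Prop :=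
  (∀ k : ℕ, t * k ∈ l.parts ↔ t * k ∈ m.parts) ∧
  ∀ r : ℕ, 1 ≤ r → 2 * r < t →
    ∃ c : ℤ, twistedRunner t r m = (fun i => i + c) '' twistedRunner t r l

/-- `m` is the `t`-bar cocore of `l`: the unique bar-partition with empty `t`-bar core and the
same `t`-bar quotient as `l`. -/
def IsBarCocoreOf (t : ℕ) (l m : BarPartition) : Prop :=
  HasEmptyBarCore t m ∧ HasSameBarQuotient t l m

/-- A fixed algebraic closure of `ℚ`. -/
abbrev Qbar := AlgebraicClosure ℚ

/-- `σ` is a `σ_p`-type automorphism of `ℚ̄`: it raises every root of unity of order coprime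
to `p` to its `p`-th power, and fixes every root of unity of `p`-power order. -/
def IsSigmaPType (p : ℕ) (σ : Qbar ≃ₐ[ℚ] Qbar) : Prop :=
  (∀ (ζ : Qbar) (n : ℕ), 0 < n → Nat.Coprime n p → ζ ^ n = 1 → σ ζ = ζ ^ p) ∧
  (∀ (ζ : Qbar) (k : ℕ), ζ ^ (p ^ k) = 1 → σ ζ = ζ)

/-- The discriminant `D_λ` attached to a bar-partition `λ` of `n` with `k` parts:
`2·(−1)^((n−k+1)/2)·λ₁⋯λ_k` if `n − k` is odd, and `(−1)^((n−k)/2)·λ₁⋯λ_k` if `n − k` is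
even. -/
def barDisc (l : BarPartition) : ℤ :=
  if (l.size - l.length) % 2 = 1 then
    2 * (-1) ^ ((l.size - l.length + 1) / 2) * ∏ a ∈ l.parts, (a : ℤ)
  else
    (-1) ^ ((l.size - l.length) / 2) * ∏ a ∈ l.parts, (a : ℤ)

/-!
Give each part `a` of a bar-partition `P` the sign `s(a) = ±1` of its absolutely least residue
modulo `p`, and put `e(P) = ∑ (a - s(a))` and `Θ(P) = ∏ s(a) a`. Then `e(P) ≡ |P| - ℓ(P)` modulo `2`
and `D_P = 2 ^ (e(P) % 2) * (-1) ^ ⌈e(P) / 2⌉ * Θ(P)`.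

Passing from `λ` to its `p`-bar core and cocore, `e` is additive and `τ(Θ, σ)` is multiplicative.
Indeed, a twisted runner is a Maya diagram, and the parts on the runners `r` and `p - r` are its
defects with respect to the vacuum. Their signs `s(a)` sum to its charge, which is invariant under
bar removals; their sizes are expressed by its charge and energy, and the energy corrected by the
charge is invariant under shifts and vanishes for the core. On these runners `s(a) a ≡ r`, and
quadratic reciprocity shows that `σ` acts on the square roots of an integer `m` prime to `p` by the
Legendre symbol of `m` modulo `p`, so each such factor of `Θ` contributes the same sign.

Hence the sign sought is the contribution of the failure of `⌈e / 2⌉` to be additive: a factor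
`τ(-1, σ) = (-1) ^ ((p - 1) / 2)`, present exactly when `e` is odd for both the core and the cocore.
-/

section SqrtSign

variable {K : Type*} [Field K]

open Classical in
/-- The sign by which the field endomorphism `σ` acts on the square roots of the integer `D`,
with value `0` at `D = 0` so that it is multiplicative on all of `ℤ`; see `sqrtSign` for the
bundled version. -/
noncomputable def sqrtSignFun (σ : K →+* K) (D : ℤ) : ℤ :=
  if D = 0 then 0 else if ∀ α : K, α ^ 2 = D → σ α = α then 1 else -1

theorem map_eq_sqrtSignFun_mul (σ : K →+* K) {D : ℤ} {α : K} (hα : α ^ 2 = D) :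
    σ α = sqrtSignFun σ D * α := by
  unfold sqrtSignFun
  split_ifs with hD hfix
  · have hα0 : α = 0 := by simpa [hD] using hα
    simp [hα0]
  · simpa using hfix α hα
  · push Not at hfix
    obtain ⟨β, hβ, hσβ⟩ := hfix
    have hneg : σ β = -β := by
      refine (sq_eq_sq_iff_eq_or_eq_neg.1 ?_).resolve_left hσβ
      rw [← map_pow, hβ, map_intCast]
    rcases sq_eq_sq_iff_eq_or_eq_neg.1 (hα.trans hβ.symm) with rfl | rfl <;> simp [hneg]

variable [CharZero K]

theorem sqrtSignFun_eq_of_map_eq_mul {σ : K →+* K} {D e : ℤ} {α : K} (hD : D ≠ 0)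
    (hα : α ^ 2 = D) (hσα : σ α = e * α) : sqrtSignFun σ D = e := by
  have hα0 : α ≠ 0 := by
    rintro rfl
    exact hD (by simpa using hα.symm)
  exact_mod_cast mul_right_cancel₀ hα0 ((map_eq_sqrtSignFun_mul σ hα).symm.trans hσα)

variable [IsAlgClosed K]

theorem sqrtSignFun_mul (σ : K →+* K) (D E : ℤ) :
    sqrtSignFun σ (D * E) = sqrtSignFun σ D * sqrtSignFun σ E := by
  rcases eq_or_ne D 0 with rfl | hD
  · simp [sqrtSignFun]
  rcases eq_or_ne E 0 with rfl | hE
  · simp [sqrtSignFun]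
  obtain ⟨α, hα⟩ := IsAlgClosed.exists_pow_nat_eq (D : K) two_pos
  obtain ⟨β, hβ⟩ := IsAlgClosed.exists_pow_nat_eq (E : K) two_pos
  refine sqrtSignFun_eq_of_map_eq_mul (α := α * β) (mul_ne_zero hD hE) ?_ ?_
  · rw [mul_pow, hα, hβ, Int.cast_mul]
  · rw [map_mul, map_eq_sqrtSignFun_mul σ hα, map_eq_sqrtSignFun_mul σ hβ, Int.cast_mul]
    ring

/-- The sign `τ(D, σ)` of `σ` on the square roots of the integer `D`, as a multiplicative
function of `D`; its value at `0` is `0`. -/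
noncomputable def sqrtSign (σ : K →+* K) : ℤ →*₀ ℤ where
  toFun := sqrtSignFun σ
  map_zero' := if_pos rfl
  map_one' := sqrtSignFun_eq_of_map_eq_mul (α := 1) one_ne_zero (by simp) (by simp)
  map_mul' := sqrtSignFun_mul σ

theorem sqrtSign_eq_of_map_eq_mul {σ : K →+* K} {D e : ℤ} {α : K} (hD : D ≠ 0)
    (hα : α ^ 2 = D) (hσα : σ α = e * α) : sqrtSign σ D = e :=
  sqrtSignFun_eq_of_map_eq_mul hD hα hσα

theorem sqrtSign_eq_of_forall_map_eq_mul {σ : K →+* K} {D e : ℤ} (hD : D ≠ 0)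
    (h : ∀ α : K, α ^ 2 = D → σ α = e * α) : sqrtSign σ D = e := by
  obtain ⟨α, hα⟩ := IsAlgClosed.exists_pow_nat_eq (D : K) two_pos
  exact sqrtSign_eq_of_map_eq_mul hD hα (h α hα)

theorem sqrtSign_sq (σ : K →+* K) {D : ℤ} (hD : D ≠ 0) : sqrtSign σ D ^ 2 = 1 := by
  rw [← map_pow]
  exact sqrtSign_eq_of_map_eq_mul (α := D) (pow_ne_zero 2 hD) (by simp) (by simp)

end SqrtSign

section RootsOfUnity

variable {K : Type*} [Field K]

/-- The endomorphism `σ` raises the roots of unity of order prime to `p` to their `p`-th power.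
This is the first half of `IsSigmaPType`. -/
def IsFrobeniusOnCoprimeRoots (p : ℕ) (σ : K →+* K) : Prop :=
  ∀ (ζ : K) (n : ℕ), n.Coprime p → ζ ^ n = 1 → σ ζ = ζ ^ p

theorem map_gaussSum_of_isQuadratic {R R' : Type*} [CommRing R] [Fintype R] [CommRing R']
    {χ : MulChar R R'} (hχ : χ.IsQuadratic) {ψ : AddChar R R'} {σ : R' →+* R'} {u : Rˣ}
    (hψ : ∀ a, σ (ψ a) = ψ (u * a)) : σ (gaussSum χ ψ) = χ u * gaussSum χ ψ := by
  have hσχ (a : R) : σ (χ a) = χ a := by rcases hχ a with h | h | h <;> simp [h]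
  calc σ (gaussSum χ ψ) = gaussSum χ (ψ.mulShift u) := by
        simp [gaussSum, map_sum, map_mul, hσχ, hψ, AddChar.mulShift_apply]
    _ = χ u * gaussSum χ ψ := by rw [gaussSum_mulShift_eq, hχ.inv]

variable {p : ℕ} {σ : K →+* K}

theorem IsFrobeniusOnCoprimeRoots.map_addChar (hσ : IsFrobeniusOnCoprimeRoots p σ) {q : ℕ}
    (hqp : q.Coprime p) (ψ : AddChar (ZMod q) K) (a : ZMod q) : σ (ψ a) = ψ (p * a) := by
  have hroot : ψ a ^ q = 1 := by simp [← AddChar.map_nsmul_eq_pow]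
  rw [hσ _ q hqp hroot, ← AddChar.map_nsmul_eq_pow, nsmul_eq_mul]

theorem exists_sq_eq_and_map_eq_legendreSym_mul [CharZero K] [IsAlgClosed K]
    (hσ : IsFrobeniusOnCoprimeRoots p σ) {q : ℕ} [Fact q.Prime] (hq : q ≠ 2)
    (hqp : q.Coprime p) :
    ∃ g : K, g ^ 2 = ((-1) ^ (q / 2) * q : ℤ) ∧ σ g = legendreSym q p * g := by
  obtain ⟨ζ, hζ⟩ := HasEnoughRootsOfUnity.exists_primitiveRoot K q
  let ψ := AddChar.zmodChar q hζ.pow_eq_one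
  let χ := (quadraticChar (ZMod q)).ringHomComp (Int.castRingHom K)
  have hχ_apply (a : ℤ) : χ a = legendreSym q a := rfl
  have hχ : χ.IsQuadratic := (quadraticChar_isQuadratic (ZMod q)).comp _
  have hχ_ne : χ ≠ 1 := (MulChar.ringHomComp_ne_one_iff Int.cast_injective).2
    (quadraticChar_ne_one (by rwa [ZMod.ringChar_zmod_n]))
  refine ⟨gaussSum χ ψ, ?_, ?_⟩
  · have hneg : χ (-1) = ((-1) ^ (q / 2) : ℤ) := by
      have := hχ_apply (-1)
      rwa [legendreSym.at_neg_one hq,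
        ZMod.χ₄_eq_neg_one_pow ((Fact.out : q.Prime).mod_two_eq_one_iff_ne_two.2 hq), Int.cast_neg,
        Int.cast_one] at this
    rw [gaussSum_sq hχ_ne hχ (AddChar.zmodChar_primitive_of_primitive_root q hζ), hneg, ZMod.card]
    push_cast
    rfl
  · have hu := map_gaussSum_of_isQuadratic hχ (u := ZMod.unitOfCoprime p hqp.symm)
      (hσ.map_addChar hqp ψ)
    rwa [ZMod.coe_unitOfCoprime, ← Int.cast_natCast, hχ_apply] at hu

variable [CharZero K] [IsAlgClosed K]

theorem sqrtSign_neg_one (hp : Odd p) (hσ : IsFrobeniusOnCoprimeRoots p σ) :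
    sqrtSign σ (-1) = (-1) ^ ((p - 1) / 2) := by
  obtain ⟨i, hi⟩ := IsAlgClosed.exists_pow_nat_eq (-1 : K) two_pos
  have hi4 : i ^ 4 = 1 := by linear_combination (i ^ 2 - 1) * hi
  have hcop : Nat.Coprime 4 p := hp.coprime_two_left.pow_left 2
  refine sqrtSign_eq_of_map_eq_mul (by decide) (by simpa using hi) ?_
  obtain ⟨k, rfl⟩ := hp
  rw [hσ i 4 hcop hi4, pow_succ, pow_mul, hi, Nat.add_sub_cancel, Nat.mul_div_cancel_left k two_pos]
  push_cast
  rfl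

variable [Fact p.Prime]

theorem sqrtSign_two (hp : p ≠ 2) (hσ : IsFrobeniusOnCoprimeRoots p σ) :
    sqrtSign σ 2 = legendreSym p 2 := by
  have hodd : p % 2 = 1 := (Fact.out : p.Prime).mod_two_eq_one_iff_ne_two.2 hp
  obtain ⟨ζ, hζ⟩ := IsAlgClosed.exists_pow_nat_eq (-1 : K) (n := 4) (by norm_num)
  have hζ8 : ζ ^ 8 = 1 := by linear_combination (ζ ^ 4 - 1) * hζ
  have hcop : Nat.Coprime 8 p := (Nat.odd_iff.2 hodd).coprime_two_left.pow_left 3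
  refine sqrtSign_eq_of_map_eq_mul (α := ζ - ζ ^ 3) two_ne_zero ?_ ?_
  · push_cast
    linear_combination (ζ ^ 2 - 2) * hζ
  · rw [legendreSym.at_two hp, ZMod.χ₈_nat_eq_if_mod_eight, if_neg (by lia), map_sub, map_pow,
      hσ ζ 8 hcop hζ8, pow_eq_pow_mod p hζ8]
    have hp8 : p % 8 = 1 ∨ p % 8 = 3 ∨ p % 8 = 5 ∨ p % 8 = 7 := by lia
    rcases hp8 with h | h | h | h <;> simp only [h] <;> norm_num
    · linear_combination (ζ ^ 5 - ζ) * hζ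
    · linear_combination (ζ - ζ ^ 11 + ζ ^ 7 - ζ ^ 3) * hζ
    · linear_combination (ζ ^ 3 - ζ - ζ ^ 17 + ζ ^ 13 - ζ ^ 9 + ζ ^ 5) * hζ

theorem sqrtSign_prime (hp : p ≠ 2) (hσ : IsFrobeniusOnCoprimeRoots p σ) {q : ℕ}
    [Fact q.Prime] (hq : q ≠ 2) (hqp : q ≠ p) : sqrtSign σ q = legendreSym p q := by
  have hp_odd : Odd p := (Fact.out : p.Prime).odd_of_ne_two hp
  have hcop := (Nat.coprime_primes (Fact.out : q.Prime) (Fact.out : p.Prime)).2 hqp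
  have hq0 : (q : ℤ) ≠ 0 := mod_cast (Fact.out : q.Prime).ne_zero
  obtain ⟨g, hg, hσg⟩ := exists_sq_eq_and_map_eq_legendreSym_mul hσ hq hcop
  have hsign := sqrtSign_eq_of_map_eq_mul (mul_ne_zero (pow_ne_zero _ (by decide)) hq0) hg hσg
  have hhalf : (p - 1) / 2 = p / 2 := by
    obtain ⟨k, rfl⟩ := hp_odd
    lia
  rw [map_mul, map_pow, sqrtSign_neg_one hp_odd hσ, hhalf, ← pow_mul,
    legendreSym.quadratic_reciprocity' hp hq] at hsign
  exact mul_left_cancel₀ (pow_ne_zero _ (by decide)) hsign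

theorem sqrtSign_natCast_eq_legendreSym (hp : p ≠ 2) (hσ : IsFrobeniusOnCoprimeRoots p σ) (m : ℕ) :
    ¬ p ∣ m → sqrtSign σ m = legendreSym p m := by
  induction m using Nat.recOnMul with
  | zero => simp
  | one => simp
  | prime q hq =>
    intro h
    have := Fact.mk hq
    rcases eq_or_ne q 2 with rfl | hq2
    · exact sqrtSign_two hp hσ
    · exact sqrtSign_prime hp hσ hq2 (by rintro rfl; exact h dvd_rfl)
  | mul a b iha ihb =>
    intro h
    rw [Nat.cast_mul, map_mul, legendreSym.mul, iha (mt (Dvd.dvd.mul_right · b) h),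
      ihb (mt (Dvd.dvd.mul_left · a) h)]

theorem sqrtSign_eq_legendreSym (hp : p ≠ 2) (hσ : IsFrobeniusOnCoprimeRoots p σ) {m : ℤ}
    (hm : (m : ZMod p) ≠ 0) : sqrtSign σ m = legendreSym p m := by
  have hp_odd : Odd p := (Fact.out : p.Prime).odd_of_ne_two hp
  have hneg_one : sqrtSign σ (-1) = legendreSym p (-1) := by
    obtain ⟨k, rfl⟩ := id hp_odd
    rw [sqrtSign_neg_one hp_odd hσ, legendreSym.at_neg_one hp, ZMod.χ₄_eq_neg_one_pow (by lia)]
    congr 1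
    lia
  obtain ⟨n, rfl | rfl⟩ := m.eq_nat_or_neg
  · refine sqrtSign_natCast_eq_legendreSym hp hσ n ?_
    rwa [Int.cast_natCast, Ne, ZMod.natCast_eq_zero_iff] at hm
  · rw [neg_eq_neg_one_mul, map_mul, legendreSym.mul, hneg_one,
      sqrtSign_natCast_eq_legendreSym hp hσ n]
    rwa [Int.cast_neg, Int.cast_natCast, neg_ne_zero, Ne, ZMod.natCast_eq_zero_iff] at hm

end RootsOfUnity

section MayaDiagram

open Set Function

/-- A Maya diagram: a set of integers that agrees with `{i | i < 0}` up to a finite set. -/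
def IsMaya (X : Set ℤ) : Prop := (symmDiff X (Iio 0)).Finite

/-- The sum of `F` over the Maya diagram `X`, regularised by subtracting the sum of `F` over
`{i | i < 0}`; it has its intended meaning when `IsMaya X`. -/
noncomputable def mayaSum (X : Set ℤ) (F : ℤ → ℤ) : ℤ :=
  ∑ᶠ i, (X.indicator F i - (Iio 0).indicator F i)

/-- The charge of a Maya diagram: the number of its nonnegative elements minus the number of
negative integers missing from it. -/
noncomputable def mayaCharge (X : Set ℤ) : ℤ := mayaSum X fun _ => 1

/-- The energy of a Maya diagram: the regularised sum of its elements. -/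
noncomputable def mayaEnergy (X : Set ℤ) : ℤ := mayaSum X id

/-- Twice the size of the partition whose Frobenius symbol is read off a shift of the Maya
diagram `X` of charge `0`; the correction by the charge makes it invariant under shifts. -/
noncomputable def mayaSize (X : Set ℤ) : ℤ :=
  2 * mayaEnergy X - mayaCharge X * (mayaCharge X - 1)

theorem support_indicator_sub_indicator_subset {α M : Type*} [AddGroup M] (s t : Set α)
    (f : α → M) : support (fun a => s.indicator f a - t.indicator f a) ⊆ symmDiff s t := by
  intro a ha
  by_contra hst
  have hiff : a ∈ s ↔ a ∈ t := by
    rw [mem_symmDiff] at hst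
    tauto
  by_cases h : a ∈ t <;> exact ha (by simp [hiff, h])

theorem IsMaya.hasFiniteSupport {X : Set ℤ} (hX : IsMaya X) (F : ℤ → ℤ) :
    HasFiniteSupport fun i => X.indicator F i - (Iio 0).indicator F i :=
  hX.subset (support_indicator_sub_indicator_subset X (Iio 0) F)

theorem mayaSum_eq_finsum_mem_symmDiff (X : Set ℤ) (F : ℤ → ℤ) :
    mayaSum X F = ∑ᶠ i ∈ symmDiff X (Iio 0), if i < 0 then -F i else F i := by
  refine finsum_congr fun i => ?_
  by_cases hX : i ∈ X <;> by_cases hi : i < 0 <;> simp [mem_symmDiff, hX, hi]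

theorem mayaSum_affine {X : Set ℤ} (hX : IsMaya X) (a b : ℤ) :
    mayaSum X (fun i => a * i + b) = a * mayaEnergy X + b * mayaCharge X := by
  have hfin (c : ℤ) (F : ℤ → ℤ) :
      HasFiniteSupport fun i => c * (X.indicator F i - (Iio 0).indicator F i) :=
    (hX.hasFiniteSupport F).mul_right _
  rw [mayaEnergy, mayaCharge, mayaSum, mayaSum, mayaSum, mul_finsum, mul_finsum,
    ← finsum_add_distrib (hfin a id) (hfin b _)]
  refine finsum_congr fun i => ?_
  by_cases hXi : i ∈ X <;> by_cases hi : i < 0 <;> simp [hXi, hi, add_comm]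

theorem mayaSum_Iio_zero (F : ℤ → ℤ) : mayaSum (Iio 0) F = 0 := by simp [mayaSum]

theorem mayaSize_Iio_zero : mayaSize (Iio 0) = 0 := by
  simp [mayaSize, mayaEnergy, mayaCharge, mayaSum_Iio_zero]

theorem IsMaya.image_add {X : Set ℤ} (hX : IsMaya X) (c : ℤ) : IsMaya ((· + c) '' X) := by
  have hIio : (symmDiff (Iio c) (Iio (0 : ℤ))).Finite := by
    refine ((finite_Ico 0 c).union (finite_Ico c 0)).subset fun i hi => ?_
    simp only [mem_symmDiff, mem_Iio, mem_union, mem_Ico] at hi ⊢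
    lia
  refine ((hX.image (· + c)).union hIio).subset ?_
  rw [image_symmDiff (add_left_injective c), image_add_const_Iio, zero_add]
  exact symmDiff_triangle _ _ _

theorem mayaSum_image_add_one {X : Set ℤ} (hX : IsMaya X) (F : ℤ → ℤ) :
    mayaSum ((· + 1) '' X) F = mayaSum X (fun i => F (i + 1)) + F 0 := by
  have hsingle : F 0 = ∑ᶠ i : ℤ, ({-1} : Set ℤ).indicator (fun i => F (i + 1)) i := by
    rw [← finsum_mem_def, finsum_mem_singleton, neg_add_cancel]
  have hfin : HasFiniteSupport (({-1} : Set ℤ).indicator fun i => F (i + 1)) :=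
    (finite_singleton _).subset support_indicator_subset
  rw [hsingle, mayaSum, mayaSum, ← finsum_add_distrib (hX.hasFiniteSupport _) hfin,
    ← finsum_comp_equiv (Equiv.addRight 1)]
  refine finsum_congr fun i => ?_
  have himage : i + 1 ∈ (· + 1) '' X ↔ i ∈ X := (add_left_injective 1).mem_set_image
  classical
  simp only [Equiv.coe_addRight, indicator_apply, himage, mem_Iio, mem_singleton_iff]
  split_ifs <;> lia

theorem mayaSize_image_add_one {X : Set ℤ} (hX : IsMaya X) :
    mayaSize ((· + 1) '' X) = mayaSize X := by
  have hcharge : mayaCharge ((· + 1) '' X) = mayaCharge X + 1 := mayaSum_image_add_one hX _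
  have henergy : mayaEnergy ((· + 1) '' X) = mayaEnergy X + mayaCharge X := by
    have := mayaSum_affine hX 1 1
    rw [mayaEnergy, mayaSum_image_add_one hX]
    simpa only [one_mul, id, add_zero] using this
  rw [mayaSize, mayaSize, hcharge, henergy]
  ring

theorem mayaSize_image_add {X : Set ℤ} (hX : IsMaya X) (c : ℤ) :
    mayaSize ((· + c) '' X) = mayaSize X := by
  have hsucc (d : ℤ) : mayaSize ((· + (d + 1)) '' X) = mayaSize ((· + d) '' X) := by
    rw [← mayaSize_image_add_one (hX.image_add d), image_image]
    simp only [add_assoc]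
  induction c using Int.induction_on with
  | zero => simp
  | succ n ih => rw [hsucc, ih]
  | pred n ih => rw [← ih, ← hsucc, sub_add_cancel]

theorem IsMaya.exists_eq_image_Iio {X : Set ℤ} (hX : IsMaya X)
    (hdown : ∀ i, i + 1 ∈ X → i ∈ X) : ∃ c : ℤ, X = (· + c) '' Iio 0 := by
  have hbdd : ∃ b, ∀ i ∈ X, i ≤ b := by
    obtain ⟨b, hb⟩ := hX.bddAbove
    refine ⟨max b 0, fun i hi => ?_⟩
    by_contra! hlt
    exact (le_max_left b 0).not_gt
      (hlt.trans_le (hb (Or.inl ⟨hi, ((le_max_right b 0).trans_lt hlt).not_gt⟩)))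
  have hne : ∃ i, i ∈ X := by
    by_contra! hempty
    refine Iio_infinite (0 : ℤ) (hX.subset fun i hi => Or.inr ⟨hi, hempty i⟩)
  obtain ⟨g, hg, hmax⟩ := Int.exists_greatest_of_bdd hbdd hne
  refine ⟨g + 1, Set.ext fun i => ?_⟩
  rw [image_add_const_Iio, zero_add, mem_Iio, Int.lt_add_one_iff]
  refine ⟨hmax i, fun hi => ?_⟩
  induction i, hi using Int.leInductionDown with
  | base => exact hg
  | pred n _ ih => exact hdown _ (by rwa [sub_add_cancel])

end MayaDiagram

section Residue

/-- The absolute value of the absolutely least residue of `a` modulo `t`. -/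
def residueAbs (t a : ℕ) : ℕ := (a : ZMod t).valMinAbs.natAbs

/-- The sign of the absolutely least residue of `a` modulo `t`, with value `1` if `t ∣ a`. -/
def residueSign (t a : ℕ) : ℤ := if (a : ZMod t).valMinAbs < 0 then -1 else 1

theorem isUnit_residueSign (t a : ℕ) : IsUnit (residueSign t a) := by
  unfold residueSign
  split_ifs <;> decide

theorem residueSign_mul_cast (t a : ℕ) :
    ((residueSign t a * a : ℤ) : ZMod t) = residueAbs t a := by
  unfold residueSign residueAbs
  rw [← Int.cast_natCast (R := ZMod t) (Int.natAbs _), Int.natCast_natAbs]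
  split_ifs with h
  · rw [abs_of_neg h]
    simp
  · rw [abs_of_nonneg (not_lt.1 h)]
    simp

theorem residueAbs_natAbs (t : ℕ) (z : ℤ) :
    residueAbs t z.natAbs = (z : ZMod t).valMinAbs.natAbs := by
  rcases z.natAbs_eq with h | h <;> rw [h] <;> simp [residueAbs, ZMod.natAbs_valMinAbs_neg]

theorem residueAbs_eq_zero_iff {t a : ℕ} : residueAbs t a = 0 ↔ t ∣ a := by
  rw [residueAbs, Int.natAbs_eq_zero, ZMod.valMinAbs_eq_zero, ZMod.natCast_eq_zero_iff]

variable {t r : ℕ}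

theorem residueAbs_natAbs_mul_add (ht : 2 * r < t) (i : ℤ) :
    residueAbs t (t * i + r).natAbs = r := by
  rw [residueAbs_natAbs]
  simp [ZMod.valMinAbs_natCast_of_le_half (show r ≤ t / 2 by lia)]

theorem natCast_mul_add_neg_iff (hrt : r < t) (i : ℤ) : (t * i + r : ℤ) < 0 ↔ i < 0 := by
  constructor <;> intro h <;> by_contra! <;> nlinarith

theorem residueSign_natAbs_mul_add (hr : 0 < r) (ht : 2 * r < t) (i : ℤ) :
    residueSign t (t * i + r).natAbs = if i < 0 then -1 else 1 := by
  have hval : (r : ZMod t).valMinAbs = r := ZMod.valMinAbs_natCast_of_le_half (by lia)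
  have hval_neg : (-(r : ZMod t)).valMinAbs = -r := by
    rw [ZMod.valMinAbs_neg_of_ne_half, hval]
    rw [ZMod.val_natCast_of_lt (by lia)]
    lia
  have hneg_iff := natCast_mul_add_neg_iff (show r < t by lia) i
  rw [residueSign, ← Int.cast_natCast, Int.natCast_natAbs]
  split_ifs with h hi hi
  · rfl
  · rw [abs_of_nonneg (not_lt.1 (mt hneg_iff.1 hi))] at h
    simp only [Int.cast_add, Int.cast_mul, Int.cast_natCast, CharP.cast_eq_zero, zero_mul,
      zero_add, hval] at h
    lia
  · rw [abs_of_neg (hneg_iff.2 hi)] at h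
    simp [hval_neg, hr] at h
  · rfl

theorem residueSign_mul_natAbs_mul_add (hr : 0 < r) (ht : 2 * r < t) (i : ℤ) :
    residueSign t (t * i + r).natAbs * (t * i + r).natAbs = t * i + r := by
  have hneg_iff := natCast_mul_add_neg_iff (show r < t by lia) i
  rw [residueSign_natAbs_mul_add hr ht, Int.natCast_natAbs]
  split_ifs with hi
  · rw [abs_of_neg (hneg_iff.2 hi)]
    ring
  · rw [abs_of_nonneg (not_lt.1 (mt hneg_iff.1 hi)), one_mul]

end Residue

namespace BarPartition

open Finset

/-- The parts of `P` on the runners `r` and `t - r` of the `t`-bar-abacus. -/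
def runnerPair (t r : ℕ) (P : BarPartition) : Finset ℕ := {a ∈ P.parts | residueAbs t a = r}

variable {t r : ℕ}

theorem mem_twistedRunner_iff (ht : 2 * r < t) {P : BarPartition} {i : ℤ} :
    i ∈ twistedRunner t r P ↔ (0 ≤ i ↔ (t * i + r).natAbs ∈ P.parts) := by
  rcases lt_or_ge i 0 with hi | hi
  · have hnatAbs : (t * i + r).natAbs = t * (-(i + 1)).toNat + (t - r) := by
      zify [show r ≤ t by lia]
      rw [Int.toNat_of_nonneg (by lia), abs_of_neg ((natCast_mul_add_neg_iff (by lia) i).2 hi)]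
      ring
    simp [twistedRunner, hi, hi.not_ge, hnatAbs]
  · have hnatAbs : (t * i + r).natAbs = t * i.toNat + r := by
      zify
      rw [Int.toNat_of_nonneg hi, abs_of_nonneg (by positivity)]
    simp [twistedRunner, hi, hi.not_gt, hnatAbs]

theorem symmDiff_twistedRunner (ht : 2 * r < t) (P : BarPartition) :
    symmDiff (twistedRunner t r P) (Set.Iio 0) = {i : ℤ | (t * i + r).natAbs ∈ P.parts} := by
  ext i
  rw [Set.mem_symmDiff, mem_twistedRunner_iff ht, Set.mem_Iio, Set.mem_ofPred_eq, ← not_le]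
  tauto

theorem bijOn_runnerPair (hr : 0 < r) (ht : 2 * r < t) (P : BarPartition) :
    Set.BijOn (fun i : ℤ => (t * i + r).natAbs) (symmDiff (twistedRunner t r P) (Set.Iio 0))
      (runnerPair t r P) := by
  rw [symmDiff_twistedRunner ht]
  refine ⟨fun i hi => ?_, fun i _ j _ hij => ?_, fun a ha => ?_⟩
  · exact mem_coe.2 (mem_filter.2 ⟨hi, residueAbs_natAbs_mul_add ht i⟩)
  · have hz := congrArg (fun a : ℕ => residueSign t a * a) hij
    dsimp only at hz
    rw [residueSign_mul_natAbs_mul_add hr ht, residueSign_mul_natAbs_mul_add hr ht] at hz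
    simpa [show t ≠ 0 by lia] using hz
  · obtain ⟨haP, har⟩ := mem_filter.1 (mem_coe.1 ha)
    obtain ⟨i, hi⟩ : ∃ i : ℤ, residueSign t a * a = t * i + r := by
      have hmod := residueSign_mul_cast t a
      rw [har, ← Int.cast_natCast (R := ZMod t) r, ZMod.intCast_eq_intCast_iff_dvd_sub] at hmod
      obtain ⟨j, hj⟩ := hmod
      exact ⟨-j, by linear_combination -hj⟩
    have hnatAbs : (t * i + r).natAbs = a := by
      rw [← hi, Int.natAbs_mul, Int.isUnit_iff_natAbs_eq.1 (isUnit_residueSign t a), one_mul,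
        Int.natAbs_natCast]
    exact ⟨i, by rwa [Set.mem_ofPred_eq, hnatAbs], hnatAbs⟩

theorem isMaya_twistedRunner (hr : 0 < r) (ht : 2 * r < t) (P : BarPartition) :
    IsMaya (twistedRunner t r P) :=
  (bijOn_runnerPair hr ht P).finite_iff_finite.2 (finite_toSet _)

theorem mayaSum_twistedRunner (hr : 0 < r) (ht : 2 * r < t) (P : BarPartition) (G : ℤ → ℤ) :
    mayaSum (twistedRunner t r P) (fun i => G (t * i + r)) =
      ∑ a ∈ runnerPair t r P, residueSign t a * G (residueSign t a * a) := by
  rw [mayaSum_eq_finsum_mem_symmDiff, ← finsum_mem_coe_finset]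
  refine finsum_mem_eq_of_bijOn _ (bijOn_runnerPair hr ht P) fun i _ => ?_
  rw [residueSign_mul_natAbs_mul_add hr ht, residueSign_natAbs_mul_add hr ht]
  split_ifs <;> simp

theorem mayaCharge_twistedRunner (hr : 0 < r) (ht : 2 * r < t) (P : BarPartition) :
    mayaCharge (twistedRunner t r P) = ∑ a ∈ runnerPair t r P, residueSign t a := by
  simpa only [mayaCharge, mul_one] using mayaSum_twistedRunner hr ht P fun _ => 1

theorem sum_runnerPair_eq_mayaEnergy_add_mayaCharge (hr : 0 < r) (ht : 2 * r < t)
    (P : BarPartition) :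
    ∑ a ∈ runnerPair t r P, (a : ℤ) =
      t * mayaEnergy (twistedRunner t r P) + r * mayaCharge (twistedRunner t r P) := by
  rw [← mayaSum_affine (isMaya_twistedRunner hr ht P), mayaSum_twistedRunner hr ht P fun z => z]
  refine sum_congr rfl fun a _ => ?_
  rw [← mul_assoc, Int.isUnit_mul_self (isUnit_residueSign t a), one_mul]

end BarPartition

section BarRemoval

open Finset BarPartition Relation

variable {t r : ℕ} {P Q : BarPartition}

theorem BarRemoval.sum_eq {f : ZMod t → ℤ} (hf : f.Odd) (h : BarRemoval t P Q) :
    ∑ a ∈ P.parts, f a = ∑ a ∈ Q.parts, f a := by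
  rcases h with ⟨a, ha, hta, hnot, hQ⟩ | ⟨ht, hQ⟩ | ⟨a, ha, b, hb, hab, hsum, hQ⟩ <;> rw [hQ]
  · have hcast : ((a - t : ℕ) : ZMod t) = a := by simp [Nat.cast_sub hta.le]
    rw [sum_insert (mt mem_of_mem_erase hnot), hcast,
      add_sum_erase P.parts (fun a : ℕ => f a) ha]
  · rw [← add_sum_erase P.parts (fun a : ℕ => f a) ht, ZMod.natCast_self, hf.map_zero, zero_add]
  · have hneg : (b : ZMod t) = -a := by
      rw [eq_neg_iff_add_eq_zero, ← Nat.cast_add, add_comm, hsum, ZMod.natCast_self]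
    rw [← add_sum_erase P.parts (fun a : ℕ => f a) ha,
      ← add_sum_erase (P.parts.erase a) (fun a : ℕ => f a) (mem_erase.2 ⟨hab.symm, hb⟩),
      hneg, hf, add_neg_cancel_left]

theorem sum_eq_of_reflTransGen_barRemoval {f : ZMod t → ℤ} (hf : f.Odd)
    (h : ReflTransGen (BarRemoval t) P Q) : ∑ a ∈ P.parts, f a = ∑ a ∈ Q.parts, f a := by
  induction h with
  | refl => rfl
  | tail _ hstep ih => exact ih.trans (hstep.sum_eq hf)

theorem sum_residueSign_runnerPair_eq_sum_parts (hr : 0 < r) (P : BarPartition) :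
    ∑ a ∈ runnerPair t r P, residueSign t a = ∑ a ∈ P.parts,
      (if (a : ZMod t).valMinAbs.natAbs = r then (a : ZMod t).valMinAbs.sign else 0) := by
  rw [runnerPair, sum_filter]
  refine sum_congr rfl fun a _ => ?_
  rw [residueAbs, residueSign]
  split_ifs with har hneg
  · exact (Int.sign_eq_neg_one_of_neg hneg).symm
  · exact (Int.sign_eq_one_of_pos (by lia)).symm
  · rfl

theorem odd_ite_sign_valMinAbs (ht : Odd t) (r : ℕ) : Function.Odd fun x : ZMod t =>
    if x.valMinAbs.natAbs = r then x.valMinAbs.sign else 0 := by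
  intro x
  have hneg : (-x).valMinAbs = -x.valMinAbs := ZMod.valMinAbs_neg_of_ne_half fun h =>
    (Nat.not_even_iff_odd.2 ht) ⟨x.val, by lia⟩
  dsimp only
  rw [hneg, Int.natAbs_neg, Int.sign_neg, apply_ite Neg.neg, neg_zero]

theorem sum_residueSign_runnerPair_eq_of_reflTransGen (ht : Odd t) (hr : 0 < r)
    (h : ReflTransGen (BarRemoval t) P Q) :
    ∑ a ∈ runnerPair t r P, residueSign t a = ∑ a ∈ runnerPair t r Q, residueSign t a := by
  rw [sum_residueSign_runnerPair_eq_sum_parts hr, sum_residueSign_runnerPair_eq_sum_parts hr]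
  exact sum_eq_of_reflTransGen_barRemoval (odd_ite_sign_valMinAbs ht r) h

theorem IsBarCore.sub_mem (hP : IsBarCore t P) {a : ℕ} (ha : a ∈ P.parts) (hta : t < a) :
    a - t ∈ P.parts := by
  by_contra hnot
  exact hP ⟨insert (a - t) (P.parts.erase a), by simp [P.zero_not_mem]; lia⟩
    (Or.inl ⟨a, ha, hta, hnot, rfl⟩)

theorem IsBarCore.not_dvd (hP : IsBarCore t P) {a : ℕ} (ha : a ∈ P.parts) : ¬ t ∣ a := by
  rintro ⟨k, rfl⟩
  induction k with
  | zero => exact P.zero_not_mem ha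
  | succ k ih =>
    rcases k.eq_zero_or_pos with rfl | hk
    · refine hP ⟨P.parts.erase t, by simp [P.zero_not_mem]⟩ (Or.inr (Or.inl ⟨?_, rfl⟩))
      simpa using ha
    · have ht : 0 < t := pos_of_ne_zero fun h => P.zero_not_mem (by simpa [h] using ha)
      exact ih (by simpa [mul_add] using hP.sub_mem ha (lt_mul_of_one_lt_right ht (by lia)))

theorem IsBarCore.add_ne (hP : IsBarCore t P) {a b : ℕ} (ha : a ∈ P.parts) (hb : b ∈ P.parts)
    (hab : a ≠ b) : a + b ≠ t := fun h =>
  hP ⟨(P.parts.erase a).erase b, by simp [P.zero_not_mem]⟩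
    (Or.inr (Or.inr ⟨a, ha, b, hb, hab, h, rfl⟩))

theorem IsBarCore.mem_twistedRunner_of_add_one_mem (hP : IsBarCore t P) (hr : 0 < r)
    (ht : 2 * r < t) {i : ℤ} (hi : i + 1 ∈ twistedRunner t r P) : i ∈ twistedRunner t r P := by
  rw [mem_twistedRunner_iff ht] at hi ⊢
  have hi_neg := natCast_mul_add_neg_iff (show r < t by lia) i
  have hi_succ_neg := natCast_mul_add_neg_iff (show r < t by lia) (i + 1)
  rw [mul_add, mul_one] at hi hi_succ_neg
  obtain hi0 | rfl | hi1 : 0 ≤ i ∨ i = -1 ∨ i + 1 < 0 := by lia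
  · have hpos : (0 : ℤ) ≤ t * i := by positivity
    have hmem := hP.sub_mem (hi.1 (by lia)) (by lia)
    rw [show (t * i + t + r : ℤ).natAbs - t = (t * i + r).natAbs by lia] at hmem
    exact iff_of_true hi0 hmem
  · simp only [mul_neg, mul_one, neg_add_cancel, le_refl, zero_add, Int.natAbs_natCast,
      true_iff] at hi
    exact iff_of_false (by decide) fun h => hP.add_ne hi h (by lia) (by lia)
  · refine iff_of_false (by lia) fun h => hi1.not_ge (hi.2 ?_)
    have hmem := hP.sub_mem h (by lia)
    rwa [show (t * i + r : ℤ).natAbs - t = (t * i + t + r).natAbs by lia] at hmem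

theorem IsBarCore.mayaSize_twistedRunner (hP : IsBarCore t P) (hr : 0 < r) (ht : 2 * r < t) :
    mayaSize (twistedRunner t r P) = 0 := by
  obtain ⟨c, hc⟩ := (isMaya_twistedRunner hr ht P).exists_eq_image_Iio fun _ =>
    hP.mem_twistedRunner_of_add_one_mem hr ht
  rw [hc, mayaSize_image_add (by simp [IsMaya]), mayaSize_Iio_zero]

end BarRemoval

section Discriminant

open Finset

theorem natCast_card_eq_intCast_sum_residueSign (t : ℕ) (s : Finset ℕ) :
    (#s : ZMod 2) = ((∑ a ∈ s, residueSign t a : ℤ) : ZMod 2) := by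
  have hone (a : ℕ) : (residueSign t a : ZMod 2) = 1 := by
    rcases Int.isUnit_iff.1 (isUnit_residueSign t a) with h | h <;> rw [h] <;> decide
  simp [hone]

namespace BarPartition

theorem residueSign_le_of_mem {t : ℕ} {P : BarPartition} {a : ℕ} (ha : a ∈ P.parts) :
    residueSign t a ≤ a := by
  have ha0 : a ≠ 0 := ne_of_mem_of_not_mem ha P.zero_not_mem
  unfold residueSign
  lia

/-- The sum of `a - residueSign t a` over the parts `a` of `P`. It differs from `|P| - ℓ(P)` by an
even number, but is additive under passing to the `t`-bar core and cocore; the summands are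
nonnegative because parts are positive. -/
def residueRank (t : ℕ) (P : BarPartition) : ℕ :=
  ∑ a ∈ P.parts, ((a : ℤ) - residueSign t a).toNat

/-- The product of the parts of `P`, each multiplied by its residue sign, so that a factor coming
from the runners `r` and `t - r` is congruent to `r` modulo `t`. -/
def signedProd (t : ℕ) (P : BarPartition) : ℤ := ∏ a ∈ P.parts, residueSign t a * a

/-- The number of parts of `P` whose absolutely least residue modulo `t` is negative. -/
def numNegParts (t : ℕ) (P : BarPartition) : ℕ := #{a ∈ P.parts | residueSign t a = -1}

theorem residueRank_eq_size_sub_length_add (t : ℕ) (P : BarPartition) :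
    residueRank t P = P.size - P.length + 2 * numNegParts t P := by
  have hpos {a : ℕ} (ha : a ∈ P.parts) : 0 < a :=
    pos_of_ne_zero (ne_of_mem_of_not_mem ha P.zero_not_mem)
  have hsub : P.size - P.length = ∑ a ∈ P.parts, (a - 1) := by
    rw [size, length, card_eq_sum_ones, sum_tsub_distrib _ fun a ha => hpos ha]
  rw [hsub, numNegParts, card_filter, mul_sum, ← sum_add_distrib]
  refine sum_congr rfl fun a ha => ?_
  have := hpos ha
  have hsign := Int.isUnit_iff.1 (isUnit_residueSign t a)
  split_ifs <;> lia

theorem signedProd_eq_neg_one_pow_mul_prod (t : ℕ) (P : BarPartition) :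
    signedProd t P = (-1) ^ numNegParts t P * ∏ a ∈ P.parts, (a : ℤ) := by
  rw [signedProd, prod_mul_distrib, numNegParts, ← prod_const, prod_filter]
  congr 1
  refine prod_congr rfl fun a _ => ?_
  rcases Int.isUnit_iff.1 (isUnit_residueSign t a) with h | h <;> simp [h]

theorem barDisc_eq_mul_signedProd (t : ℕ) (P : BarPartition) :
    barDisc P = 2 ^ (residueRank t P % 2) * (-1) ^ ((residueRank t P + 1) / 2) *
      signedProd t P := by
  set d := P.size - P.length with hd
  set N := numNegParts t P with hN
  have hmod : (d + 2 * N) % 2 = d % 2 := by lia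
  have hdiv : (d + 2 * N + 1) / 2 = (d + 1) / 2 + N := by lia
  have hsq : ((-1) ^ N * (-1) ^ N : ℤ) = 1 := by rw [← mul_pow]; simp
  rw [residueRank_eq_size_sub_length_add, ← hd, ← hN, signedProd_eq_neg_one_pow_mul_prod,
    ← hN, hmod, hdiv, pow_add, barDisc, ← hd]
  split_ifs with h
  · rw [h]
    linear_combination (-2 * (-1) ^ ((d + 1) / 2) * ∏ a ∈ P.parts, (a : ℤ)) * hsq
  · rw [show d % 2 = 0 by lia, show (d + 1) / 2 = d / 2 by lia]
    linear_combination (-(-1) ^ (d / 2) * ∏ a ∈ P.parts, (a : ℤ)) * hsq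

theorem barDisc_ne_zero (P : BarPartition) : barDisc P ≠ 0 := by
  have hprod : ∏ a ∈ P.parts, (a : ℤ) ≠ 0 := prod_ne_zero_iff.2 fun a ha =>
    Nat.cast_ne_zero.2 (ne_of_mem_of_not_mem ha P.zero_not_mem)
  unfold barDisc
  split_ifs <;> simp [hprod]

theorem sgn_eq_neg_one_iff_odd_residueRank (t : ℕ) (P : BarPartition) :
    P.sgn = -1 ↔ Odd (residueRank t P) := by
  rw [sgn, neg_one_pow_eq_neg_one_iff_odd (by decide), residueRank_eq_size_sub_length_add,
    Nat.odd_add, iff_true_right (even_two_mul _)]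

end BarPartition

end Discriminant

section Cocore

open Finset BarPartition

variable {t r : ℕ} {l κ μ : BarPartition}

theorem sum_residueSign_runnerPair_of_hasEmptyBarCore (ht : Odd t) (hr : 0 < r)
    (hμ : HasEmptyBarCore t μ) : ∑ a ∈ runnerPair t r μ, residueSign t a = 0 :=
  (sum_residueSign_runnerPair_eq_of_reflTransGen ht hr hμ).trans
    (by simp [runnerPair, BarPartition.empty])

theorem sum_residueSign_runnerPair_eq_add (ht : Odd t) (hr : 0 < r) (hκ : IsBarCoreOf t l κ)
    (hμ : HasEmptyBarCore t μ) :
    ∑ a ∈ runnerPair t r l, residueSign t a =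
      ∑ a ∈ runnerPair t r κ, residueSign t a + ∑ a ∈ runnerPair t r μ, residueSign t a := by
  rw [sum_residueSign_runnerPair_of_hasEmptyBarCore ht hr hμ, add_zero,
    sum_residueSign_runnerPair_eq_of_reflTransGen ht hr hκ.1]

theorem mayaEnergy_twistedRunner_eq_add (ht : Odd t) (hr : 0 < r) (hrt : 2 * r < t)
    (hκ : IsBarCoreOf t l κ) (hμ : IsBarCocoreOf t l μ) :
    mayaEnergy (twistedRunner t r l) =
      mayaEnergy (twistedRunner t r κ) + mayaEnergy (twistedRunner t r μ) := by
  have hsizeκ := hκ.2.mayaSize_twistedRunner hr hrt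
  have hsizeμ : mayaSize (twistedRunner t r μ) = mayaSize (twistedRunner t r l) := by
    obtain ⟨c, hc⟩ := hμ.2.2 r hr hrt
    rw [hc, mayaSize_image_add (isMaya_twistedRunner hr hrt l)]
  have hchargeκ : mayaCharge (twistedRunner t r l) = mayaCharge (twistedRunner t r κ) := by
    rw [mayaCharge_twistedRunner hr hrt, mayaCharge_twistedRunner hr hrt,
      sum_residueSign_runnerPair_eq_of_reflTransGen ht hr hκ.1]
  have hchargeμ : mayaCharge (twistedRunner t r μ) = 0 := by
    rw [mayaCharge_twistedRunner hr hrt,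
      sum_residueSign_runnerPair_of_hasEmptyBarCore ht hr hμ.1]
  rw [mayaSize] at hsizeκ
  rw [mayaSize, mayaSize, hchargeκ, hchargeμ] at hsizeμ
  lia

theorem sum_runnerPair_eq_add (ht : Odd t) (hr : 0 < r) (hrt : 2 * r < t)
    (hκ : IsBarCoreOf t l κ) (hμ : IsBarCocoreOf t l μ) :
    ∑ a ∈ runnerPair t r l, (a : ℤ) =
      ∑ a ∈ runnerPair t r κ, (a : ℤ) + ∑ a ∈ runnerPair t r μ, (a : ℤ) := by
  have hcharge := sum_residueSign_runnerPair_eq_add ht hr hκ hμ.1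
  simp only [← mayaCharge_twistedRunner hr hrt] at hcharge
  simp only [sum_runnerPair_eq_mayaEnergy_add_mayaCharge hr hrt, hcharge,
    mayaEnergy_twistedRunner_eq_add ht hr hrt hκ hμ]
  ring

theorem IsBarCore.runnerPair_zero (hκ : IsBarCore t κ) : runnerPair t 0 κ = ∅ :=
  filter_eq_empty_iff.2 fun _ ha => mt residueAbs_eq_zero_iff.1 (hκ.not_dvd ha)

theorem HasSameBarQuotient.runnerPair_zero (h : HasSameBarQuotient t l μ) :
    runnerPair t 0 l = runnerPair t 0 μ := by
  ext a
  simp only [runnerPair, mem_filter, residueAbs_eq_zero_iff, and_congr_left_iff]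
  rintro ⟨k, rfl⟩
  exact h.1 k

@[to_additive]
theorem BarPartition.prod_prod_runnerPair {M : Type*} [CommMonoid M] (ht : Odd t) (f : ℕ → M)
    (P : BarPartition) :
    ∏ r ∈ range ((t + 1) / 2), ∏ a ∈ runnerPair t r P, f a = ∏ a ∈ P.parts, f a := by
  have : NeZero t := ⟨by rintro rfl; simp at ht⟩
  refine prod_fiberwise_of_maps_to (fun a _ => mem_range.2 ?_) f
  have := ZMod.natAbs_valMinAbs_le (a : ZMod t)
  rw [residueAbs]
  obtain ⟨k, rfl⟩ := ht
  lia

@[to_additive]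
theorem prod_parts_eq_mul {M : Type*} [CommMonoid M] (ht : Odd t) (hκ : IsBarCore t κ)
    (hμ : HasSameBarQuotient t l μ) (f : ℕ → M)
    (hf : ∀ r, 0 < r → 2 * r < t → ∏ a ∈ runnerPair t r l, f a =
      (∏ a ∈ runnerPair t r κ, f a) * ∏ a ∈ runnerPair t r μ, f a) :
    ∏ a ∈ l.parts, f a = (∏ a ∈ κ.parts, f a) * ∏ a ∈ μ.parts, f a := by
  rw [← prod_prod_runnerPair ht f l, ← prod_prod_runnerPair ht f κ, ← prod_prod_runnerPair ht f μ,
    ← prod_mul_distrib]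
  refine prod_congr rfl fun r hr => ?_
  rcases r.eq_zero_or_pos with rfl | hr0
  · rw [hκ.runnerPair_zero, hμ.runnerPair_zero, prod_empty, one_mul]
  · exact hf r hr0 (by rw [mem_range] at hr; lia)

theorem residueRank_eq_add (ht : Odd t) (hκ : IsBarCoreOf t l κ) (hμ : IsBarCocoreOf t l μ) :
    residueRank t l = residueRank t κ + residueRank t μ := by
  refine sum_parts_eq_add ht hκ.2 hμ.2 _ fun r hr hrt => ?_
  have hcast (P : BarPartition) :
      ∑ a ∈ runnerPair t r P, (((a : ℤ) - residueSign t a).toNat : ℤ) =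
        ∑ a ∈ runnerPair t r P, (a : ℤ) - ∑ a ∈ runnerPair t r P, residueSign t a := by
    rw [← sum_sub_distrib]
    exact sum_congr rfl fun a ha => Int.toNat_of_nonneg <| sub_nonneg.2 <|
      residueSign_le_of_mem (mem_filter.1 ha).1
  zify
  rw [hcast, hcast, hcast, sum_runnerPair_eq_add ht hr hrt hκ hμ,
    sum_residueSign_runnerPair_eq_add ht hr hκ hμ.1]
  ring

theorem card_runnerPair_mod_two_eq_add (ht : Odd t) (hr : 0 < r) (hκ : IsBarCoreOf t l κ)
    (hμ : HasEmptyBarCore t μ) :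
    #(runnerPair t r l) % 2 = (#(runnerPair t r κ) + #(runnerPair t r μ)) % 2 := by
  rw [← ZMod.natCast_eq_natCast_iff', Nat.cast_add]
  simp only [natCast_card_eq_intCast_sum_residueSign t]
  rw [sum_residueSign_runnerPair_eq_add ht hr hκ hμ, Int.cast_add]

end Cocore

section SqrtSignBarDisc

open Finset BarPartition

variable {K : Type*} [Field K] [CharZero K] [IsAlgClosed K] {p : ℕ} [Fact p.Prime]
  {l κ μ : BarPartition} {σ : K →+* K}

theorem sqrtSign_barDisc (t : ℕ) (σ : K →+* K) (P : BarPartition) :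
    sqrtSign σ (barDisc P) = sqrtSign σ 2 ^ residueRank t P *
      sqrtSign σ (-1) ^ ((residueRank t P + 1) / 2) * sqrtSign σ (signedProd t P) := by
  rw [barDisc_eq_mul_signedProd t, map_mul, map_mul, map_pow, map_pow,
    ← pow_eq_pow_mod _ (sqrtSign_sq σ two_ne_zero)]

theorem sqrtSign_signedProd_eq_mul (hp : Odd p) (hσ : IsFrobeniusOnCoprimeRoots p σ)
    (hκ : IsBarCoreOf p l κ) (hμ : IsBarCocoreOf p l μ) :
    sqrtSign σ (signedProd p l) = sqrtSign σ (signedProd p κ) * sqrtSign σ (signedProd p μ) := by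
  simp only [signedProd, map_prod]
  refine prod_parts_eq_mul hp hκ.2 hμ.2 _ fun r hr hrp => ?_
  have hr0 : ((r : ℤ) : ZMod p) ≠ 0 := by
    rw [Int.cast_natCast, Ne, ZMod.natCast_eq_zero_iff]
    exact Nat.not_dvd_of_pos_of_lt hr (by lia)
  have hprod (P : BarPartition) : ∏ a ∈ runnerPair p r P, sqrtSign σ (residueSign p a * a) =
      legendreSym p r ^ #(runnerPair p r P) := by
    refine prod_eq_pow_card fun a ha => ?_
    have hcast : ((residueSign p a * a : ℤ) : ZMod p) = (r : ℤ) := by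
      rw [residueSign_mul_cast, (mem_filter.1 ha).2, Int.cast_natCast]
    rw [sqrtSign_eq_legendreSym (hp.ne_two_of_dvd_nat dvd_rfl) hσ (hcast ▸ hr0), legendreSym,
      hcast, legendreSym]
  have hsq : legendreSym p r ^ 2 = 1 := legendreSym.sq_one p hr0
  rw [hprod, hprod, hprod, ← pow_add, pow_eq_pow_mod _ hsq,
    card_runnerPair_mod_two_eq_add hp hr hκ hμ.1, ← pow_eq_pow_mod _ hsq]

end SqrtSignBarDisc

theorem pow_add_add_one_div_two {M : Type*} [CommMonoid M] {ε : M} (hε : ε ^ 2 = 1) (m n : ℕ) :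
    ε ^ ((m + n + 1) / 2) = (if Odd m ∧ Odd n then ε else 1) *
      (ε ^ ((m + 1) / 2) * ε ^ ((n + 1) / 2)) := by
  split_ifs with h
  · obtain ⟨⟨a, rfl⟩, b, rfl⟩ := h
    rw [show (2 * a + 1 + (2 * b + 1) + 1) / 2 = a + b + 1 by lia,
      show (2 * a + 1 + 1) / 2 = a + 1 by lia, show (2 * b + 1 + 1) / 2 = b + 1 by lia,
      ← pow_add, ← pow_succ', show a + 1 + (b + 1) + 1 = a + b + 1 + 2 by lia, pow_add _ _ 2, hε,
      mul_one]
  · rw [one_mul, ← pow_add]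
    congr 1
    rw [Nat.odd_iff, Nat.odd_iff] at h
    lia

theorem tau_barLittlewood_of_sgn_neg_general {K : Type*} [Field K] [CharZero K] [IsAlgClosed K]
    {p : ℕ} [Fact p.Prime] (hp : Odd p) {l κ μ : BarPartition} (hκ : IsBarCoreOf p l κ)
    (hμ : IsBarCocoreOf p l μ) {σ : K →+* K} (hσ : IsFrobeniusOnCoprimeRoots p σ) {τl τκ τμ : ℤ}
    (hτl : ∀ α : K, α ^ 2 = barDisc l → σ α = τl * α)
    (hτκ : ∀ α : K, α ^ 2 = barDisc κ → σ α = τκ * α)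
    (hτμ : ∀ α : K, α ^ 2 = barDisc μ → σ α = τμ * α) :
    τl = (if κ.sgn = -1 ∧ μ.sgn = -1 then (-1) ^ ((p - 1) / 2) else 1) * (τκ * τμ) := by
  rw [← sqrtSign_eq_of_forall_map_eq_mul (BarPartition.barDisc_ne_zero l) hτl,
    ← sqrtSign_eq_of_forall_map_eq_mul (BarPartition.barDisc_ne_zero κ) hτκ,
    ← sqrtSign_eq_of_forall_map_eq_mul (BarPartition.barDisc_ne_zero μ) hτμ,
    sqrtSign_barDisc p, sqrtSign_barDisc p, sqrtSign_barDisc p, residueRank_eq_add hp hκ hμ,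
    pow_add_add_one_div_two (sqrtSign_sq σ (by decide)), sqrtSign_signedProd_eq_mul hp hσ hκ hμ,
    ← sqrtSign_neg_one hp hσ]
  simp only [BarPartition.sgn_eq_neg_one_iff_odd_residueRank p]
  ring

theorem IsSigmaPType.isFrobeniusOnCoprimeRoots {p : ℕ} (hp : p ≠ 1) {σ : Qbar ≃ₐ[ℚ] Qbar}
    (hσ : IsSigmaPType p σ) : IsFrobeniusOnCoprimeRoots p (σ : Qbar →+* Qbar) :=
  fun ζ n hn hζ => hσ.1 ζ n (pos_of_ne_zero (by rintro rfl; simp_all)) hn hζ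

/-- Let `p` be an odd prime, `λ` a bar-partition with `p`-bar core `κ` and
`p`-bar cocore `μ`, and `σ` a `σ_p`-type automorphism of `ℚ̄`. If `sgn(κ) = −1` and
`sgn(μ) = −1`, then `τ(λ,σ) = (−1)^((p−1)/2)·τ(κ,σ)·τ(μ,σ)`. -/
theorem tau_barLittlewood_of_sgn_neg (p : ℕ) (hp : p.Prime) (hpodd : Odd p)
    (l κ μ : BarPartition) (hκ : IsBarCoreOf p l κ) (hμ : IsBarCocoreOf p l μ)
    (σ : Qbar ≃ₐ[ℚ] Qbar) (hσ : IsSigmaPType p σ)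
    (τl τκ τμ : ℤ)
    (hτl : ∀ α : Qbar, α ^ 2 = (barDisc l : Qbar) → σ α = (τl : Qbar) * α)
    (hτκ : ∀ α : Qbar, α ^ 2 = (barDisc κ : Qbar) → σ α = (τκ : Qbar) * α)
    (hτμ : ∀ α : Qbar, α ^ 2 = (barDisc μ : Qbar) → σ α = (τμ : Qbar) * α)
    (hsgnκ : κ.sgn = -1) (hsgnμ : μ.sgn = -1) :
    τl = (-1) ^ ((p - 1) / 2) * (τκ * τμ) := by
  have := Fact.mk hp
  simpa only [hsgnκ, hsgnμ, and_self, if_true] using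
    tau_barLittlewood_of_sgn_neg_general hpodd hκ hμ
      (hσ.isFrobeniusOnCoprimeRoots hp.ne_one) hτl hτκ hτμ
end

section
/- Let t ≥ 3 be an odd integer. For every bar-partition λ there exists an integer d ≥ 0 such that ℓ(λ) = ℓ(λ_(t̄)) + ℓ(λ^[t̄]) − 2d; in particular ℓ(λ) ≤ ℓ(λ_(t̄)) + ℓ(λ^[t̄]) and the difference is even. -/
open scoped BigOperators

/-!
A pair of runners `r`, `t - r` glued into a twisted runner is a Maya diagram, and the parts on the
two runners are the `b` beads above and the `g` gaps below the fence. Its charge `b - g` is a sum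
over the parts of an odd function of their residues, hence invariant under bar removals: it is `0`
for the cocore, while for the core, where `b = 0` or `g = 0`, its absolute value is the number of
parts. If a shift by `c` takes the twisted runner of `λ` to charge `0`, with `b' = g'` beads and
gaps, then `|c|` is the contribution of the core and `2b'` that of the cocore. For `c ≥ 0` the shift
does not decrease the number of beads and `g = b + c`, so `c + 2b' - (b + g) = 2(b' - b)` is even
and nonnegative; for `c ≤ 0` exchange beads and gaps. Summing over the pairs of runners, together
with runner `0`, gives the theorem.
-/

/-! ### Maya diagrams -/

/-- The beads above the fence of the diagram `S ⊆ ℤ`, indexed by their distance from it. -/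
def beadsAbove (S : Set ℤ) : Set ℕ := {k | (k : ℤ) ∈ S}

/-- The gaps below the fence of the diagram `S ⊆ ℤ`, indexed by their distance from it: the gap at
the integer `-(k + 1)` has index `k`. -/
def gapsBelow (S : Set ℤ) : Set ℕ := {k | -((k : ℤ) + 1) ∉ S}

/-- A Maya diagram: a set of integers differing at only finitely many places from the set of
negative integers. -/
structure IsMayaDiagram (S : Set ℤ) : Prop where
  finite_beadsAbove : (beadsAbove S).Finite
  finite_gapsBelow : (gapsBelow S).Finite

/-- The charge of a Maya diagram. As `Set.ncard` is `0` on infinite sets, it is meaningful for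
Maya diagrams only. -/
noncomputable def charge (S : Set ℤ) : ℤ := (beadsAbove S).ncard - (gapsBelow S).ncard

/-- The defect of a Maya diagram: the number of places where it differs from the set of negative
integers. As `Set.ncard` is `0` on infinite sets, it is meaningful for Maya diagrams only. -/
noncomputable def defect (S : Set ℤ) : ℕ := (beadsAbove S).ncard + (gapsBelow S).ncard

theorem defect_eq_natAbs_charge {S : Set ℤ} (h : beadsAbove S = ∅ ∨ gapsBelow S = ∅) :
    defect S = (charge S).natAbs := by
  rcases h with h | h <;> simp [defect, charge, h]

theorem image_add_right_preimage_add_right (A : Set ℕ) (n : ℕ) :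
    (· + n) '' ((· + n) ⁻¹' A) = A \ Set.Iio n := by
  ext k
  constructor
  · rintro ⟨j, hj, rfl⟩
    exact ⟨hj, by simp⟩
  · rintro ⟨hk, hn⟩
    have hkn : k - n + n = k := Nat.sub_add_cancel (not_lt.1 hn)
    exact ⟨k - n, by simpa [hkn] using hk, hkn⟩

theorem finite_preimage_add_right_iff {A : Set ℕ} {n : ℕ} :
    ((· + n) ⁻¹' A).Finite ↔ A.Finite := by
  rw [← Set.finite_image_iff (add_left_injective n).injOn, image_add_right_preimage_add_right]
  exact ⟨fun h => h.of_sdiff (Set.finite_Iio n), fun h => h.sdiff⟩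

theorem ncard_preimage_add_right_add_ncard_inter_Iio {A : Set ℕ} (hA : A.Finite) (n : ℕ) :
    ((· + n) ⁻¹' A).ncard + (A ∩ Set.Iio n).ncard = A.ncard := by
  rw [← Set.ncard_image_of_injective _ (add_left_injective n), image_add_right_preimage_add_right,
    add_comm, Set.ncard_inter_add_ncard_sdiff_eq_ncard A _ hA]

section Shift

variable (S : Set ℤ) (n : ℕ)

theorem preimage_beadsAbove_image_add_right :
    (· + n) ⁻¹' beadsAbove ((· + (n : ℤ)) '' S) = beadsAbove S := by
  ext k
  simp [beadsAbove]

theorem preimage_gapsBelow :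
    (· + n) ⁻¹' gapsBelow S = gapsBelow ((· + (n : ℤ)) '' S) := by
  ext k
  have hk : -(((k + n : ℕ) : ℤ) + 1) = -((k : ℤ) + 1) + -n := by push_cast; ring
  simp only [gapsBelow, Set.mem_preimage, Set.mem_ofPred_eq, Set.image_add_right, hk]

theorem ncard_beadsAbove_image_inter_Iio_add_ncard_gapsBelow_inter_Iio :
    (beadsAbove ((· + (n : ℤ)) '' S) ∩ Set.Iio n).ncard + (gapsBelow S ∩ Set.Iio n).ncard = n := by
  set A := beadsAbove ((· + (n : ℤ)) '' S)
  have reflect : gapsBelow S ∩ Set.Iio n = (n - 1 - ·) '' (Set.Iio n \ A) := by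
    -- The shift moves the place `-(k + 1)` to `n - 1 - k`.
    have gap_iff_not_bead {j k : ℕ} (h : j + k + 1 = n) : k ∈ gapsBelow S ↔ j ∉ A := by
      have hjk : -((k : ℤ) + 1) = j + -n := by omega
      simp only [gapsBelow, A, beadsAbove, Set.mem_ofPred_eq, Set.image_add_right,
        Set.mem_preimage, hjk]
    ext k
    constructor
    · rintro ⟨hk, hkn : k < n⟩
      exact ⟨n - 1 - k, ⟨Set.mem_Iio.2 (by omega), (gap_iff_not_bead (by omega)).1 hk⟩,
        Nat.sub_sub_self (by omega)⟩
    · rintro ⟨j, ⟨hjn : j < n, hj⟩, hjk : n - 1 - j = k⟩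
      exact ⟨(gap_iff_not_bead (by omega)).2 hj, Set.mem_Iio.2 (by omega)⟩
  have reflect_injOn : Set.InjOn (n - 1 - ·) (Set.Iio n \ A) := by
    rintro i ⟨hi : i < n, -⟩ j ⟨hj : j < n, -⟩ (hij : n - 1 - i = n - 1 - j)
    omega
  rw [reflect, reflect_injOn.ncard_image, Set.inter_comm,
    Set.ncard_inter_add_ncard_sdiff_eq_ncard _ _ (Set.finite_Iio n), Set.ncard_Iio_nat]

variable {S n}

theorem isMayaDiagram_image_add_natCast :
    IsMayaDiagram ((· + (n : ℤ)) '' S) ↔ IsMayaDiagram S := by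
  constructor <;> rintro ⟨hb, hg⟩ <;> constructor
  · exact preimage_beadsAbove_image_add_right S n ▸ finite_preimage_add_right_iff.2 hb
  · exact finite_preimage_add_right_iff.1 (preimage_gapsBelow S n ▸ hg)
  · exact finite_preimage_add_right_iff.1 (preimage_beadsAbove_image_add_right S n ▸ hb)
  · exact preimage_gapsBelow S n ▸ finite_preimage_add_right_iff.2 hg

theorem IsMayaDiagram.ncard_beadsAbove_le_image_add_natCast (hS : IsMayaDiagram S) :
    (beadsAbove S).ncard ≤ (beadsAbove ((· + (n : ℤ)) '' S)).ncard := by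
  have split := ncard_preimage_add_right_add_ncard_inter_Iio
    (isMayaDiagram_image_add_natCast (n := n).2 hS).finite_beadsAbove n
  rw [preimage_beadsAbove_image_add_right] at split
  omega

theorem IsMayaDiagram.ncard_gapsBelow_image_add_natCast_le (hS : IsMayaDiagram S) :
    (gapsBelow ((· + (n : ℤ)) '' S)).ncard ≤ (gapsBelow S).ncard := by
  have split := ncard_preimage_add_right_add_ncard_inter_Iio hS.finite_gapsBelow n
  rw [preimage_gapsBelow] at split
  omega

theorem IsMayaDiagram.charge_image_add_natCast (hS : IsMayaDiagram S) :
    charge ((· + (n : ℤ)) '' S) = charge S + n := by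
  have beads_split := ncard_preimage_add_right_add_ncard_inter_Iio
    (isMayaDiagram_image_add_natCast (n := n).2 hS).finite_beadsAbove n
  have gaps_split := ncard_preimage_add_right_add_ncard_inter_Iio hS.finite_gapsBelow n
  have near_fence := ncard_beadsAbove_image_inter_Iio_add_ncard_gapsBelow_inter_Iio S n
  rw [preimage_beadsAbove_image_add_right] at beads_split
  rw [preimage_gapsBelow] at gaps_split
  simp only [charge]
  omega

end Shift

theorem IsMayaDiagram.exists_defect_add_two_mul_eq {S : Set ℤ} (hS : IsMayaDiagram S) {c : ℤ}
    (h0 : charge ((· + c) '' S) = 0) :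
    ∃ d : ℕ, defect S + 2 * d = (charge S).natAbs + defect ((· + c) '' S) := by
  obtain ⟨n, rfl | rfl⟩ := c.eq_nat_or_neg
  · have charge_eq := hS.charge_image_add_natCast (n := n)
    have beads_le := hS.ncard_beadsAbove_le_image_add_natCast (n := n)
    refine ⟨(beadsAbove ((· + (n : ℤ)) '' S)).ncard - (beadsAbove S).ncard, ?_⟩
    simp only [charge, defect] at *
    omega
  · set T := (· + (-n : ℤ)) '' S
    have shift_back : (· + (n : ℤ)) '' T = S := by
      simp only [T, Set.image_image, neg_add_cancel_right, Set.image_id']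
    rw [← shift_back] at hS ⊢
    rw [isMayaDiagram_image_add_natCast] at hS
    have charge_eq := hS.charge_image_add_natCast (n := n)
    have gaps_le := hS.ncard_gapsBelow_image_add_natCast_le (n := n)
    refine ⟨(gapsBelow T).ncard - (gapsBelow ((· + (n : ℤ)) '' T)).ncard, ?_⟩
    simp only [charge, defect] at *
    omega

/-! ### Runners of the bar-abacus -/

theorem sum_range_two_mul_add_one {M : Type*} [AddCommMonoid M] (f : ℕ → M) (k : ℕ) :
    ∑ r ∈ Finset.range (2 * k + 1), f r =
      f 0 + ∑ r ∈ Finset.Icc 1 k, (f r + f (2 * k + 1 - r)) := by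
  have upper_half : ∑ r ∈ Finset.Ico 1 (k + 1), f (2 * k + 1 - r) =
      ∑ r ∈ Finset.Ico (k + 1) (2 * k + 1), f r := by
    rw [Finset.sum_Ico_reflect _ _ (by omega)]
    congr 2
    omega
  rw [← Finset.Ico_add_one_right_eq_Icc, Finset.sum_add_distrib, upper_half,
    Finset.sum_Ico_consecutive _ (by omega) (by omega), Finset.range_eq_Ico,
    Finset.sum_eq_sum_Ico_succ_bot (by omega)]

namespace BarPartition

/-- The occupied slots on runner `r` of the `t`-bar-abacus of `l`. -/
def runner (l : BarPartition) (t r : ℕ) : Set ℕ := {k | t * k + r ∈ l.parts}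

theorem slot_injective {t : ℕ} (ht : 0 < t) (r : ℕ) : Function.Injective (t * · + r) :=
  fun i j hij => by simpa [ht.ne'] using hij

theorem finite_runner (l : BarPartition) {t : ℕ} (ht : 0 < t) (r : ℕ) : (l.runner t r).Finite :=
  l.parts.finite_toSet.preimage (slot_injective ht r).injOn

theorem ncard_runner (l : BarPartition) {t r : ℕ} (hr : r < t) :
    (l.runner t r).ncard = (l.parts.filter fun a : ℕ => (a : ZMod t) = r).card := by
  rw [← Set.ncard_image_of_injective _ (slot_injective (pos_of_gt hr) r), ← Set.ncard_coe_finset]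
  congr 1
  ext a
  simp only [runner, Set.mem_image, Set.mem_ofPred_eq, Finset.coe_filter]
  constructor
  · rintro ⟨k, hk, rfl⟩
    exact ⟨hk, by simp⟩
  · rintro ⟨ha, hmod⟩
    have ha_eq : t * (a / t) + r = a := by
      rw [ZMod.natCast_eq_natCast_iff', Nat.mod_eq_of_lt hr] at hmod
      rw [← hmod, Nat.div_add_mod]
    exact ⟨a / t, ha_eq.symm ▸ ha, ha_eq⟩

theorem length_eq_sum_ncard_runner (l : BarPartition) {t : ℕ} (ht : 0 < t) :
    l.length = ∑ r ∈ Finset.range t, (l.runner t r).ncard := by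
  have mod_mem : ∀ a ∈ l.parts, a % t ∈ Finset.range t := fun a _ => by
    simpa using Nat.mod_lt a ht
  rw [length, Finset.card_eq_sum_card_fiberwise mod_mem]
  refine Finset.sum_congr rfl fun r hr => ?_
  rw [Finset.mem_range] at hr
  rw [ncard_runner l hr]
  simp only [ZMod.natCast_eq_natCast_iff', Nat.mod_eq_of_lt hr]

@[simp]
theorem beadsAbove_twistedRunner (l : BarPartition) (t r : ℕ) :
    beadsAbove (twistedRunner t r l) = l.runner t r := by
  ext k
  simp [beadsAbove, twistedRunner, runner]

@[simp]
theorem gapsBelow_twistedRunner (l : BarPartition) (t r : ℕ) :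
    gapsBelow (twistedRunner t r l) = l.runner t (t - r) := by
  ext k
  have below_fence : -((k : ℤ) + 1) < 0 := by omega
  have slot : (-(-((k : ℤ) + 1) + 1)).toNat = k := by omega
  simp only [gapsBelow, twistedRunner, runner, Set.mem_ofPred_eq, slot, below_fence,
    below_fence.not_ge, false_and, true_and, false_or, not_not]

theorem isMayaDiagram_twistedRunner (l : BarPartition) {t : ℕ} (ht : 0 < t) (r : ℕ) :
    IsMayaDiagram (twistedRunner t r l) where
  finite_beadsAbove := by simpa using l.finite_runner ht r
  finite_gapsBelow := by simpa using l.finite_runner ht (t - r)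

theorem length_eq_ncard_runner_zero_add_sum_defect (l : BarPartition) (k : ℕ) :
    l.length = (l.runner (2 * k + 1) 0).ncard +
      ∑ r ∈ Finset.Icc 1 k, defect (twistedRunner (2 * k + 1) r l) := by
  simp only [l.length_eq_sum_ncard_runner (Nat.succ_pos (2 * k)), sum_range_two_mul_add_one, defect,
    beadsAbove_twistedRunner, gapsBelow_twistedRunner]

end BarPartition

/-! ### Bar removals -/

theorem BarRemoval.sum_parts_eq_of_odd {t : ℕ} {μ ν : BarPartition} (h : BarRemoval t μ ν)
    {G : Type*} [AddCommGroup G] [IsAddTorsionFree G] {f : ZMod t → G} (hf : f.Odd) :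
    ∑ a ∈ ν.parts, f a = ∑ a ∈ μ.parts, f a := by
  rcases h with ⟨a, ha, hta, hnotMem, hν⟩ | ⟨ht, hν⟩ | ⟨a, ha, b, hb, hab, hadd, hν⟩
  · have same_residue : ((a - t : ℕ) : ZMod t) = a := by simp [Nat.cast_sub hta.le]
    rw [hν, Finset.sum_insert fun hmem => hnotMem (Finset.mem_of_mem_erase hmem), same_residue,
      Finset.add_sum_erase _ (fun a : ℕ => f a) ha]
  · rw [hν, ← Finset.add_sum_erase _ _ ht, ZMod.natCast_self, hf.map_zero, zero_add]
  · have opposite_residues : (b : ZMod t) = -a := by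
      rw [eq_neg_iff_add_eq_zero, add_comm, ← Nat.cast_add, hadd, ZMod.natCast_self]
    have hb' : b ∈ μ.parts.erase a := Finset.mem_erase.2 ⟨hab.symm, hb⟩
    rw [hν, ← Finset.add_sum_erase _ _ ha, ← Finset.add_sum_erase _ _ hb', opposite_residues,
      hf, add_neg_cancel_left]

/-- The contribution to the charge of the twisted runner at `r` of a part with residue `x`. -/
def residueCharge {t : ℕ} (r x : ZMod t) : ℤ := (if x = r then 1 else 0) - if x = -r then 1 else 0

theorem odd_residueCharge {t : ℕ} (r : ZMod t) : (residueCharge r).Odd := fun x => by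
  simp [residueCharge, neg_eq_iff_eq_neg]

theorem charge_twistedRunner_eq_sum (l : BarPartition) {t r : ℕ} (hr : 0 < r) (hrt : r < t) :
    charge (twistedRunner t r l) = ∑ a ∈ l.parts, residueCharge (r : ZMod t) a := by
  have neg_residue : ((t - r : ℕ) : ZMod t) = -r := by simp [Nat.cast_sub hrt.le]
  simp [charge, residueCharge, l.ncard_runner hrt,
    l.ncard_runner (Nat.sub_lt (hr.trans hrt) hr), neg_residue]

theorem charge_twistedRunner_eq_of_reflTransGen {t r : ℕ} (hr : 0 < r) (hrt : r < t)
    {l m : BarPartition} (h : Relation.ReflTransGen (BarRemoval t) l m) :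
    charge (twistedRunner t r m) = charge (twistedRunner t r l) := by
  induction h with
  | refl => rfl
  | tail _ step ih =>
    rw [← ih, charge_twistedRunner_eq_sum _ hr hrt, charge_twistedRunner_eq_sum _ hr hrt,
      step.sum_parts_eq_of_odd (odd_residueCharge _)]

theorem HasEmptyBarCore.charge_twistedRunner {t r : ℕ} (hr : 0 < r) (hrt : r < t)
    {m : BarPartition} (h : HasEmptyBarCore t m) : charge (twistedRunner t r m) = 0 := by
  rw [← charge_twistedRunner_eq_of_reflTransGen hr hrt h, charge_twistedRunner_eq_sum _ hr hrt]
  exact Finset.sum_empty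

/-! ### Bar cores -/

namespace IsBarCore

variable {t : ℕ} {κ : BarPartition} (h : IsBarCore t κ)
include h

theorem sub_mem_s5 {a : ℕ} (ha : a ∈ κ.parts) (hta : t < a) : a - t ∈ κ.parts := by
  by_contra hnotMem
  refine h ⟨insert (a - t) (κ.parts.erase a), ?_⟩ (.inl ⟨a, ha, hta, hnotMem, rfl⟩)
  simp [κ.zero_not_mem, (Nat.sub_pos_of_lt hta).ne]

theorem self_notMem : t ∉ κ.parts := fun ht =>
  h ⟨κ.parts.erase t, by simp [κ.zero_not_mem]⟩ (.inr (.inl ⟨ht, rfl⟩))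

theorem add_ne_s5 {a b : ℕ} (ha : a ∈ κ.parts) (hb : b ∈ κ.parts) (hab : a ≠ b) : a + b ≠ t :=
  fun hadd => h ⟨(κ.parts.erase a).erase b, by simp [κ.zero_not_mem]⟩
    (.inr (.inr ⟨a, ha, b, hb, hab, hadd, rfl⟩))

theorem mem_of_mem_runner {r k : ℕ} (hr : 0 < r) (hk : k ∈ κ.runner t r) : r ∈ κ.parts := by
  induction k with
  | zero => simpa [BarPartition.runner] using hk
  | succ k ih =>
    refine ih ?_
    have next_slot : t * (k + 1) + r = t * k + r + t := by ring
    simpa [BarPartition.runner, next_slot] using h.sub_mem_s5 hk (by omega)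

theorem runner_zero_eq_empty : κ.runner t 0 = ∅ := by
  refine Set.eq_empty_of_forall_notMem fun k (hk : t * k ∈ κ.parts) => ?_
  have hpos : 0 < t * k := Nat.pos_of_ne_zero fun h0 => κ.zero_not_mem (h0 ▸ hk)
  obtain ⟨j, rfl⟩ := Nat.exists_eq_succ_of_ne_zero (Nat.pos_of_mul_pos_left hpos).ne'
  exact h.self_notMem (h.mem_of_mem_runner (Nat.pos_of_mul_pos_right hpos) (k := j) hk)

theorem runner_eq_empty_or {r : ℕ} (hr : 0 < r) (hrt : 2 * r < t) :
    κ.runner t r = ∅ ∨ κ.runner t (t - r) = ∅ := by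
  by_contra! hne
  obtain ⟨⟨i, hi⟩, ⟨j, hj⟩⟩ := hne
  exact h.add_ne_s5 (h.mem_of_mem_runner hr hi) (h.mem_of_mem_runner (by omega) hj) (by omega)
    (by omega)

theorem defect_twistedRunner {r : ℕ} (hr : 0 < r) (hrt : 2 * r < t) :
    defect (twistedRunner t r κ) = (charge (twistedRunner t r κ)).natAbs :=
  defect_eq_natAbs_charge (by simpa using h.runner_eq_empty_or hr hrt)

end IsBarCore

theorem IsBarCoreOf.exists_defect_twistedRunner_add_two_mul_eq {t : ℕ} {l κ μ : BarPartition}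
    (hκ : IsBarCoreOf t l κ) (hμ : IsBarCocoreOf t l μ) {r : ℕ} (hr : 0 < r) (hrt : 2 * r < t) :
    ∃ d : ℕ, defect (twistedRunner t r l) + 2 * d =
      defect (twistedRunner t r κ) + defect (twistedRunner t r μ) := by
  have hrt' : r < t := by omega
  obtain ⟨c, hc⟩ := hμ.2.2 r hr hrt
  have charge_cocore := hμ.1.charge_twistedRunner hr hrt'
  rw [hκ.2.defect_twistedRunner hr hrt, charge_twistedRunner_eq_of_reflTransGen hr hrt' hκ.1]
  rw [hc] at charge_cocore ⊢
  exact (l.isMayaDiagram_twistedRunner (hr.trans hrt') r).exists_defect_add_two_mul_eq charge_cocore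

/-- Let `t ≥ 3` be odd. For every bar-partition `λ` with `t`-bar core `κ`
and `t`-bar cocore `μ` there is an integer `d ≥ 0` with `ℓ(λ) = ℓ(κ) + ℓ(μ) − 2d`; in
particular `ℓ(λ) ≤ ℓ(κ) + ℓ(μ)` and the difference is even. -/
theorem length_eq_barCore_add_barCocore_sub_two_mul (t : ℕ) (ht : 3 ≤ t) (htodd : Odd t)
    (l κ μ : BarPartition) (hκ : IsBarCoreOf t l κ) (hμ : IsBarCocoreOf t l μ) :
    (∃ d : ℕ, (l.length : ℤ) = (κ.length : ℤ) + μ.length - 2 * d) ∧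
    l.length ≤ κ.length + μ.length ∧
    Even ((κ.length : ℤ) + μ.length - l.length) := by
  obtain ⟨d, hd⟩ : ∃ d : ℕ, l.length + 2 * d = κ.length + μ.length := by
    obtain ⟨k, rfl⟩ := htodd
    have pair : ∀ r ∈ Finset.Icc 1 k, ∃ d : ℕ, defect (twistedRunner (2 * k + 1) r l) + 2 * d =
        defect (twistedRunner (2 * k + 1) r κ) + defect (twistedRunner (2 * k + 1) r μ) := by
      intro r hr
      rw [Finset.mem_Icc] at hr
      exact hκ.exists_defect_twistedRunner_add_two_mul_eq hμ (by omega) (by omega)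
    choose! d hd using pair
    have same_runner_zero : l.runner (2 * k + 1) 0 = μ.runner (2 * k + 1) 0 := Set.ext hμ.2.1
    refine ⟨∑ r ∈ Finset.Icc 1 k, d r, ?_⟩
    simp only [BarPartition.length_eq_ncard_runner_zero_add_sum_defect _ k]
    rw [hκ.2.runner_zero_eq_empty, Set.ncard_empty, zero_add, same_runner_zero, add_assoc,
      Finset.mul_sum, ← Finset.sum_add_distrib, Finset.sum_congr rfl hd, Finset.sum_add_distrib,
      add_left_comm]
  exact ⟨⟨d, by omega⟩, by omega, ⟨d, by omega⟩⟩
end
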